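/- Let α, β, T_c > 0. Then ∫₀^{T_c} ((x − T_c) Γ(α, β(T_c−x))/Γ(α)) · (β^α x^(α−1) e^(−βx)/Γ(α)) dx = −(T_c (βT_c)^α/Γ(α)) B(α, 2) ₁F₁(α; α+2; −βT_c) + (T_c/Γ(α)²) Σ_{n=0}^∞ ((−1)ⁿ (βT_c)^{2α+n}/(n!(α+n))) B(α, α+n+2) ₁F₁(α; 2α+n+2; −βT_c). -/

import Mathlib

/-!
Write `Γ(α, y) = Γ(α) - γ(α, y)`. Expanding `e^(-t)` in `γ(α, y) = ∫₀^y t^(α-1) e^(-t) dt` gives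
`γ(α, y) = ∑ₙ (-1)ⁿ y^(α+n) / (n! (α+n))` (`hasSum_lowerGamma`). With `y = β(T - x)`, the integral
becomes a term coming from `Γ(α)` and a series, each made of integrals
`∫₀^T x^(a-1) (T-x)^(b-1) e^(-βx) dx = T^(a+b-1) B(a, b) ₁F₁(a; a+b; -βT)`
(`integral_kummer`), Kummer's integral representation. The latter follows by expanding `e^(-βx)`
and evaluating Beta integrals. All interchanges of sum and integral are instances of
`hasSum_integral_weight_mul`: an integrable weight against a series that converges normally
on `[0, T]`.
-/

open MeasureTheory Real Set

/-- The upper incomplete gamma function `Γ(a, x) = ∫_x^∞ t^(a−1) e^(−t) dt`. -/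
noncomputable def upperGamma (a x : ℝ) : ℝ := ∫ t in Set.Ioi x, t ^ (a - 1) * Real.exp (-t)

/-- The Beta function `B(a, b) = Γ(a)Γ(b)/Γ(a+b)`. -/
noncomputable def betaFn (a b : ℝ) : ℝ := Real.Gamma a * Real.Gamma b / Real.Gamma (a + b)

/-- The rising factorial (Pochhammer symbol) `(a)_k = a(a+1)⋯(a+k−1)`. -/
noncomputable def poch (a : ℝ) (k : ℕ) : ℝ := ∏ i ∈ Finset.range k, (a + i)

/-- The confluent hypergeometric function `₁F₁(a; b; z) = Σ_k ((a)_k/(b)_k) z^k/k!`. -/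
noncomputable def hyp1F1 (a b z : ℝ) : ℝ :=
  ∑' k : ℕ, (poch a k / poch b k) * z ^ k / (k.factorial : ℝ)

/-- Integration of a series against an integrable weight, term by term, when the terms have
summable sup norms on `[0, T]`. -/
lemma hasSum_integral_weight_mul {T : ℝ} (hT : 0 ≤ T) {w : ℝ → ℝ}
    (hw : IntervalIntegrable w volume 0 T) {f : ℕ → ℝ → ℝ}
    (hf : ∀ n, ContinuousOn (f n) (Icc 0 T)) {M : ℕ → ℝ} (hM : Summable M)
    (hfM : ∀ n, ∀ x ∈ Icc 0 T, |f n x| ≤ M n) {g : ℝ → ℝ}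
    (hg : ∀ x ∈ Icc 0 T, HasSum (fun n => f n x) (g x)) :
    HasSum (fun n => ∫ x in (0:ℝ)..T, w x * f n x) (∫ x in (0:ℝ)..T, w x * g x) := by
  have hsub : ∀ x ∈ Set.uIoc 0 T, x ∈ Icc 0 T := fun x hx => by
    rw [uIoc_of_le hT] at hx
    exact Ioc_subset_Icc_self hx
  refine intervalIntegral.hasSum_integral_of_dominated_convergence
    (fun n x => |w x| * M n) (fun n => ?_) (fun n => ?_) ?_ ?_ ?_
  · refine AEStronglyMeasurable.mul hw.def'.aestronglyMeasurable ?_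
    exact ((hf n).mono hsub).aestronglyMeasurable measurableSet_uIoc
  · refine Filter.Eventually.of_forall fun x hx => ?_
    rw [Real.norm_eq_abs, abs_mul]
    exact mul_le_mul_of_nonneg_left (hfM n x (hsub x hx)) (abs_nonneg _)
  · exact Filter.Eventually.of_forall fun x _ => hM.mul_left _
  · simp_rw [tsum_mul_left]
    exact hw.abs.mul_const _
  · exact Filter.Eventually.of_forall fun x hx => (hg x (hsub x hx)).mul_left _

lemma hasSum_exp_real (z : ℝ) : HasSum (fun n : ℕ => z ^ n / (n.factorial : ℝ)) (Real.exp z) := by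
  rw [Real.exp_eq_exp_ℝ]
  exact NormedSpace.expSeries_div_hasSum_exp z

lemma intervalIntegrable_rpow_sub_one {a : ℝ} (ha : 0 < a) (T : ℝ) :
    IntervalIntegrable (fun x : ℝ => x ^ (a - 1)) volume 0 T :=
  intervalIntegral.intervalIntegrable_rpow' (by linarith)

lemma hasSum_lowerGamma {a y : ℝ} (ha : 0 < a) (hy : 0 ≤ y) :
    HasSum (fun n : ℕ => (-1 : ℝ) ^ n * y ^ (a + n) / (n.factorial * (a + n)))
      (∫ t in (0:ℝ)..y, t ^ (a - 1) * Real.exp (-t)) := by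
  have h := hasSum_integral_weight_mul hy (intervalIntegrable_rpow_sub_one ha y)
    (f := fun n t => (-t) ^ n / (n.factorial : ℝ)) (fun n => by fun_prop)
    (M := fun n => y ^ n / (n.factorial : ℝ)) (hasSum_exp_real y).summable
    (fun n x hx => by
      rw [abs_div, abs_pow, abs_neg, abs_of_nonneg hx.1, Nat.abs_cast]
      gcongr
      · exact hx.1
      · exact hx.2)
    (g := fun t => Real.exp (-t)) (fun x _ => hasSum_exp_real (-x))
  convert h using 2 with n
  have hn : 0 < a + n := by positivity
  have key : ∫ x in (0:ℝ)..y, x ^ (a - 1) * ((-x) ^ n / (n.factorial : ℝ))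
      = ∫ x in (0:ℝ)..y, ((-1 : ℝ) ^ n / n.factorial) * x ^ (a + n - 1) := by
    rw [intervalIntegral.integral_of_le hy, intervalIntegral.integral_of_le hy]
    refine setIntegral_congr_fun measurableSet_Ioc fun x hx => ?_
    have : x ^ (a + n - 1) = x ^ (a - 1) * x ^ n := by
      rw [← Real.rpow_natCast, ← Real.rpow_add hx.1]; ring_nf
    simp only [this, neg_pow x n]
    ring
  rw [key, intervalIntegral.integral_const_mul, integral_rpow (Or.inl (by linarith)),
    sub_add_cancel, Real.zero_rpow hn.ne']
  field_simp
  ring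

lemma upperGamma_eq_sub {a y : ℝ} (ha : 0 < a) (hy : 0 ≤ y) :
    upperGamma a y = Real.Gamma a - ∫ t in (0:ℝ)..y, t ^ (a - 1) * Real.exp (-t) := by
  have hint : IntegrableOn (fun t : ℝ => t ^ (a - 1) * Real.exp (-t)) (Ioi 0) := by
    simpa only [mul_comm] using Real.GammaIntegral_convergent ha
  have h := intervalIntegral.integral_Ioi_sub_Ioi hint hy
  have hG : Real.Gamma a = ∫ t in Ioi (0:ℝ), t ^ (a - 1) * Real.exp (-t) := by
    simp only [Real.Gamma_eq_integral ha, mul_comm]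
  rw [upperGamma, hG, ← h]
  ring

lemma integral_beta_scaled {a b T : ℝ} (ha : 0 < a) (hb : 0 < b) (hT : 0 < T) :
    ∫ x in (0:ℝ)..T, x ^ (a - 1) * (T - x) ^ (b - 1) = T ^ (a + b - 1) * betaFn a b := by
  have h := Complex.betaIntegral_scaled (a : ℂ) (b : ℂ) hT
  rw [Complex.betaIntegral_eq_Gamma_mul_div _ _ (by simpa) (by simpa), ← Complex.ofReal_add,
    Complex.Gamma_ofReal, Complex.Gamma_ofReal, Complex.Gamma_ofReal] at h
  have key : ∫ x in (0:ℝ)..T, (x : ℂ) ^ ((a : ℂ) - 1) * ((T : ℂ) - x) ^ ((b : ℂ) - 1)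
      = ∫ x in (0:ℝ)..T, ((x ^ (a - 1) * (T - x) ^ (b - 1) : ℝ) : ℂ) := by
    rw [intervalIntegral.integral_of_le hT.le, intervalIntegral.integral_of_le hT.le]
    refine setIntegral_congr_fun measurableSet_Ioc fun x hx => ?_
    rw [Complex.ofReal_mul, Complex.ofReal_cpow hx.1.le, Complex.ofReal_cpow (by linarith [hx.2])]
    push_cast
    rfl
  rw [key, intervalIntegral.integral_ofReal] at h
  have h2 : (T : ℂ) ^ (((a + b : ℝ) : ℂ) - 1) = ((T ^ (a + b - 1) : ℝ) : ℂ) := by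
    rw [Complex.ofReal_cpow hT.le]; push_cast; rfl
  rw [h2] at h
  unfold betaFn
  exact_mod_cast h

lemma Gamma_add_nat_eq_poch {a : ℝ} (ha : 0 < a) (k : ℕ) :
    Real.Gamma (a + k) = poch a k * Real.Gamma a := by
  induction k with
  | zero => simp [poch]
  | succ k ih =>
    have hk : a + k ≠ 0 := by positivity
    rw [Nat.cast_succ, ← add_assoc, Real.Gamma_add_one hk, ih, poch, poch, Finset.prod_range_succ]
    ring

lemma betaFn_add_nat {a b : ℝ} (ha : 0 < a) (hb : 0 < b) (k : ℕ) :
    betaFn (a + k) b = betaFn a b * (poch a k / poch (a + b) k) := by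
  unfold betaFn
  rw [Gamma_add_nat_eq_poch ha, show a + k + b = a + b + k by ring,
    Gamma_add_nat_eq_poch (add_pos ha hb)]
  rw [div_mul_div_comm]
  ring_nf

/-- Kummer's integral representation of `₁F₁`, rescaled to `[0, T]`. The restriction `1 ≤ b`
keeps `(T - x)^(b-1)` continuous, so only the left endpoint is singular. -/
lemma integral_kummer {a b T : ℝ} (c : ℝ) (ha : 0 < a) (hb : 1 ≤ b) (hT : 0 < T) :
    ∫ x in (0:ℝ)..T, x ^ (a - 1) * ((T - x) ^ (b - 1) * Real.exp (-(c * x)))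
      = T ^ (a + b - 1) * betaFn a b * hyp1F1 a (a + b) (-(c * T)) := by
  have hcont : Continuous fun x : ℝ => (T - x) ^ (b - 1) :=
    (continuous_const.sub continuous_id).rpow_const fun x => Or.inr (by linarith)
  have h := hasSum_integral_weight_mul hT.le
    ((intervalIntegrable_rpow_sub_one ha T).mul_continuousOn hcont.continuousOn)
    (f := fun n x => (-(c * x)) ^ n / (n.factorial : ℝ)) (fun n => by fun_prop)
    (M := fun n => (|c| * T) ^ n / (n.factorial : ℝ)) (hasSum_exp_real (|c| * T)).summable
    (fun n x hx => by
      rw [abs_div, abs_pow, abs_neg, abs_mul, abs_of_nonneg hx.1, Nat.abs_cast]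
      have := hx.1
      gcongr
      exact hx.2)
    (g := fun x => Real.exp (-(c * x))) (fun x _ => hasSum_exp_real (-(c * x)))
  simp only [mul_assoc] at h
  rw [← h.tsum_eq, hyp1F1, ← tsum_mul_left]
  congr 1
  funext n
  have key : ∫ x in (0:ℝ)..T, x ^ (a - 1) * ((T - x) ^ (b - 1) *
        ((-(c * x)) ^ n / (n.factorial : ℝ)))
      = ∫ x in (0:ℝ)..T, ((-c) ^ n / n.factorial) * (x ^ (a + n - 1) * (T - x) ^ (b - 1)) := by
    rw [intervalIntegral.integral_of_le hT.le, intervalIntegral.integral_of_le hT.le]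
    refine setIntegral_congr_fun measurableSet_Ioc fun x hx => ?_
    have : x ^ (a + n - 1) = x ^ (a - 1) * x ^ n := by
      rw [← Real.rpow_natCast, ← Real.rpow_add hx.1]; ring_nf
    simp only [this, ← neg_mul, mul_pow]
    ring
  have hTn : T ^ (a + n + b - 1) = T ^ (a + b - 1) * T ^ n := by
    rw [← Real.rpow_natCast, ← Real.rpow_add hT]; ring_nf
  rw [key, intervalIntegral.integral_const_mul,
    integral_beta_scaled (by positivity) (by linarith) hT, betaFn_add_nat ha (by linarith), hTn,
    ← neg_mul, mul_pow]
  ring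

theorem f3_integral (α β Tc : ℝ) (hα : 0 < α) (hβ : 0 < β) (hTc : 0 < Tc) :
    ∫ x in (0:ℝ)..Tc,
        ((x - Tc) * upperGamma α (β * (Tc - x)) / Real.Gamma α)
          * (β ^ α * x ^ (α - 1) * Real.exp (-(β * x)) / Real.Gamma α) =
      -(Tc * (β * Tc) ^ α / Real.Gamma α) * betaFn α 2 * hyp1F1 α (α + 2) (-(β * Tc))
        + (Tc / Real.Gamma α ^ 2)
          * ∑' n : ℕ, ((-1 : ℝ) ^ n * (β * Tc) ^ (2 * α + (n : ℝ)) / (n.factorial * (α + n)))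
              * betaFn α (α + n + 2) * hyp1F1 α (2 * α + n + 2) (-(β * Tc)) := by
  have hΓ : Real.Gamma α ≠ 0 := (Real.Gamma_pos_of_pos hα).ne'
  set L : ℝ → ℝ := fun y => ∫ t in (0:ℝ)..y, t ^ (α - 1) * Real.exp (-t) with hL
  have hw := intervalIntegrable_rpow_sub_one hα Tc
  -- The series part: `γ(α, β(T - x))` expanded and integrated termwise against `x^(α-1)`.
  have hser := hasSum_integral_weight_mul hTc.le hw
    (f := fun n x => ((-1 : ℝ) ^ n * (β * (Tc - x)) ^ (α + n) / (n.factorial * (α + n)))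
      * ((Tc - x) * Real.exp (-(β * x))))
    (fun n => by
      have : Continuous fun x : ℝ => (β * (Tc - x)) ^ (α + n) :=
        (continuous_const.mul (continuous_const.sub continuous_id)).rpow_const
          fun x => Or.inr (by positivity)
      fun_prop)
    (M := fun n => (β * Tc) ^ n / (n.factorial : ℝ) * ((β * Tc) ^ α / α * Tc))
    ((hasSum_exp_real (β * Tc)).summable.mul_right _)
    (fun n x hx => by
      have h0 : 0 ≤ Tc - x := by linarith [hx.2]
      have h1 : Tc - x ≤ Tc := by linarith [hx.1]
      have h2 : Real.exp (-(β * x)) ≤ 1 :=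
        Real.exp_le_one_iff.2 (by have := mul_nonneg hβ.le hx.1; linarith)
      have h3 : (β * Tc) ^ (α + n) = (β * Tc) ^ n * (β * Tc) ^ α := by
        rw [Real.rpow_add (by positivity), Real.rpow_natCast, mul_comm]
      have h4 : (0:ℝ) ≤ (n : ℝ) := n.cast_nonneg
      have hab : |((-1 : ℝ) ^ n * (β * (Tc - x)) ^ (α + n) / (n.factorial * (α + n)))
          * ((Tc - x) * Real.exp (-(β * x)))|
          = (β * (Tc - x)) ^ (α + n) / (n.factorial * (α + n))
            * ((Tc - x) * Real.exp (-(β * x))) := by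
        rw [abs_mul, abs_div, abs_mul, abs_pow, abs_neg, abs_one, one_pow, one_mul,
          abs_of_nonneg (by positivity : 0 ≤ (β * (Tc - x)) ^ (α + n)),
          abs_of_nonneg (by positivity : 0 ≤ (n.factorial * (α + n) : ℝ)),
          abs_of_nonneg (by positivity : 0 ≤ (Tc - x) * Real.exp (-(β * x)))]
      rw [hab]
      calc (β * (Tc - x)) ^ (α + n) / (n.factorial * (α + n)) * ((Tc - x) * Real.exp (-(β * x)))
          ≤ (β * Tc) ^ (α + n) / (n.factorial * α) * (Tc * 1) := by
            gcongr
            linarith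
        _ = _ := by rw [h3]; field_simp)
    (g := fun x => L (β * (Tc - x)) * ((Tc - x) * Real.exp (-(β * x))))
    (fun x hx => (hasSum_lowerGamma hα
      (mul_nonneg hβ.le (by linarith [hx.2]))).mul_right _)
  have hterm : ∀ n : ℕ, ∫ x in (0:ℝ)..Tc, x ^ (α - 1) *
      (((-1 : ℝ) ^ n * (β * (Tc - x)) ^ (α + n) / (n.factorial * (α + n)))
        * ((Tc - x) * Real.exp (-(β * x))))
      = (Tc / β ^ α) * (((-1 : ℝ) ^ n * (β * Tc) ^ (2 * α + (n : ℝ)) / (n.factorial * (α + n)))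
              * betaFn α (α + n + 2) * hyp1F1 α (2 * α + n + 2) (-(β * Tc))) := by
    intro n
    have hk := integral_kummer (b := α + n + 2) β hα
      (by have : (0:ℝ) ≤ n := n.cast_nonneg
          linarith) hTc
    have key : ∫ x in (0:ℝ)..Tc, x ^ (α - 1) *
      (((-1 : ℝ) ^ n * (β * (Tc - x)) ^ (α + n) / (n.factorial * (α + n)))
        * ((Tc - x) * Real.exp (-(β * x))))
      = ∫ x in (0:ℝ)..Tc, ((-1 : ℝ) ^ n * β ^ (α + n) / (n.factorial * (α + n))) *
        (x ^ (α - 1) * ((Tc - x) ^ (α + n + 2 - 1) * Real.exp (-(β * x)))) := by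
      rw [intervalIntegral.integral_of_le hTc.le, intervalIntegral.integral_of_le hTc.le]
      refine setIntegral_congr_fun measurableSet_Ioc fun x hx => ?_
      have h0 : 0 ≤ Tc - x := by linarith [hx.2]
      have hp : (Tc - x) ^ (α + n + 2 - 1) = (Tc - x) ^ (α + n) * (Tc - x) := by
        rw [show α + n + 2 - 1 = α + n + 1 by ring,
          Real.rpow_add_one' h0 (by positivity)]
      simp only [hp, Real.mul_rpow hβ.le h0]
      ring
    have hTp : Tc ^ (α + (α + n + 2) - 1) = Tc ^ (2 * α + n) * Tc := by
      rw [← Real.rpow_add_one hTc.ne']; ring_nf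
    have hβp : β ^ (2 * α + n) = β ^ (α + n) * β ^ α := by
      rw [← Real.rpow_add hβ]; ring_nf
    have hβα : β ^ α ≠ 0 := (Real.rpow_pos_of_pos hβ α).ne'
    rw [key, intervalIntegral.integral_const_mul, hk, hTp, Real.mul_rpow hβ.le hTc.le, hβp,
      show α + (α + n + 2) = 2 * α + n + 2 by ring]
    have : α + n ≠ 0 := by positivity
    field_simp
  have hI2 : ∫ x in (0:ℝ)..Tc,
      x ^ (α - 1) * (L (β * (Tc - x)) * ((Tc - x) * Real.exp (-(β * x)))) = _ :=
    hser.tsum_eq.symm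
  simp only [hterm, tsum_mul_left] at hI2
  have hI1 := integral_kummer (b := 2) β hα (by norm_num) hTc
  have hint1 : IntervalIntegrable
      (fun x : ℝ => x ^ (α - 1) * ((Tc - x) ^ ((2:ℝ) - 1) * Real.exp (-(β * x)))) volume 0 Tc := by
    refine hw.mul_continuousOn (Continuous.continuousOn ?_)
    norm_num
    fun_prop
  have hLcont : ContinuousOn (fun x => L (β * (Tc - x))) (uIcc 0 Tc) := by
    have hc : ContinuousOn L (Icc 0 (β * Tc)) := by
      have := intervalIntegral.continuousOn_primitive_interval'
        (a := 0) (b₁ := 0) (b₂ := β * Tc) (μ := volume)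
        ((intervalIntegrable_rpow_sub_one hα (β * Tc)).mul_continuousOn
          (g := fun t => Real.exp (-t)) (by fun_prop)) left_mem_uIcc
      rwa [uIcc_of_le (by positivity)] at this
    refine hc.comp (by fun_prop) fun x hx => ?_
    rw [uIcc_of_le hTc.le] at hx
    exact ⟨mul_nonneg hβ.le (by linarith [hx.2]), by
      gcongr
      linarith [hx.1]⟩
  have hint2 : IntervalIntegrable
      (fun x : ℝ => x ^ (α - 1) * (L (β * (Tc - x)) * ((Tc - x) * Real.exp (-(β * x)))))
      volume 0 Tc :=
    hw.mul_continuousOn (hLcont.mul (by fun_prop))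
  have hsplit : ∫ x in (0:ℝ)..Tc,
        ((x - Tc) * upperGamma α (β * (Tc - x)) / Real.Gamma α)
          * (β ^ α * x ^ (α - 1) * Real.exp (-(β * x)) / Real.Gamma α)
      = ∫ x in (0:ℝ)..Tc,
        ((-(β ^ α / Real.Gamma α)) *
          (x ^ (α - 1) * ((Tc - x) ^ ((2:ℝ) - 1) * Real.exp (-(β * x))))
        + (β ^ α / Real.Gamma α ^ 2) *
          (x ^ (α - 1) * (L (β * (Tc - x)) * ((Tc - x) * Real.exp (-(β * x)))))) := by
    refine intervalIntegral.integral_congr fun x hx => ?_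
    rw [uIcc_of_le hTc.le] at hx
    rw [upperGamma_eq_sub hα (mul_nonneg hβ.le (by linarith [hx.2])),
      show (2:ℝ) - 1 = 1 by norm_num, Real.rpow_one]
    simp only [hL]
    field_simp
    ring
  rw [hsplit, intervalIntegral.integral_add (hint1.const_mul _) (hint2.const_mul _),
    intervalIntegral.integral_const_mul, intervalIntegral.integral_const_mul, hI1, hI2,
    Real.mul_rpow hβ.le hTc.le, show α + 2 - 1 = α + 1 by ring, Real.rpow_add_one hTc.ne']
  have hβα : β ^ α ≠ 0 := (Real.rpow_pos_of_pos hβ α).ne'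
  field_simp
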